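/- arXiv:2604.01320 — 8 statements merged into one kernel-verified Lean document; each statement's English description precedes it below -/
import Mathlib

section
/- Let β > 0, let Δ ∈ (0, 1/2), let n be a nonnegative integer and set ω_n = (2π/β)(n + 1/2). Then the integral ∫₀^β (π / (β sin(πτ/β)))^{2Δ} e^{i ω_n τ} dτ converges and equals i π (sin(πΔ))^{-1} (2π/β)^{2Δ-1} · Γ(Δ + βω_n/(2π)) / (Γ(2Δ) · Γ(1 - Δ + βω_n/(2π))), where Γ is the complex Gamma function. -/
open Real MeasureTheory

lemma aux_image : (fun θ : ℝ => (1 - Real.cos θ) / 2) '' Set.Ioo 0 π = Set.Ioo 0 1 := by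
  ext t
  constructor
  · rintro ⟨θ, hθ, rfl⟩
    have h1 : Real.cos θ < 1 := by
      rw [← Real.cos_zero]
      exact Real.cos_lt_cos_of_nonneg_of_le_pi le_rfl hθ.2.le hθ.1
    have h2 : -1 < Real.cos θ := by
      rw [← Real.cos_pi]
      exact Real.cos_lt_cos_of_nonneg_of_le_pi hθ.1.le le_rfl hθ.2
    constructor <;> simp only <;> linarith
  · rintro ⟨h0, h1⟩
    refine ⟨Real.arccos (1 - 2 * t), ⟨?_, ?_⟩, ?_⟩
    · exact Real.arccos_pos.2 (by linarith)
    · exact Real.arccos_lt_pi.2 (by linarith)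
    · simp only
      rw [Real.cos_arccos (by linarith) (by linarith)]
      ring

lemma aux_pt (s θ : ℝ) (hθ : θ ∈ Set.Ioo 0 π) :
    |Real.sin θ / 2| • ((((1 - Real.cos θ) / 2 : ℝ) : ℂ) ^ ((s : ℂ) - 1) *
      (1 - (((1 - Real.cos θ) / 2 : ℝ) : ℂ)) ^ ((s : ℂ) - 1)) =
      (((1 / 2 : ℝ) ^ (2 * s - 1) : ℝ) : ℂ) * (((Real.sin θ) ^ (2 * s - 1) : ℝ) : ℂ) := by
  have hs := Real.sin_pos_of_mem_Ioo hθ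
  have hm : (1 - Real.cos θ) / 2 ∈ Set.Ioo (0:ℝ) 1 := by
    rw [← aux_image]; exact ⟨θ, hθ, rfl⟩
  set t := (1 - Real.cos θ) / 2 with ht
  have e1 : (t : ℂ) ^ ((s : ℂ) - 1) = ((t ^ (s - 1) : ℝ) : ℂ) := by
    rw [Complex.ofReal_cpow hm.1.le]; push_cast; rfl
  have e2 : (1 - (t : ℂ)) ^ ((s : ℂ) - 1) = (((1 - t) ^ (s - 1) : ℝ) : ℂ) := by
    rw [Complex.ofReal_cpow (by linarith [hm.2])]; push_cast; rfl
  rw [e1, e2, Complex.real_smul]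
  norm_cast
  rw [← Real.mul_rpow hm.1.le (by linarith [hm.2]), abs_of_pos (by linarith),
    ← Real.mul_rpow (by norm_num) hs.le]
  have e3 : t * (1 - t) = (Real.sin θ / 2) ^ (2:ℝ) := by
    rw [Real.rpow_two, div_pow, Real.sin_sq, ht]; ring
  rw [e3, ← Real.rpow_mul (by linarith)]
  have h4 : 0 < Real.sin θ / 2 := by linarith
  rw [mul_comm (Real.sin θ / 2), ← Real.rpow_add_one h4.ne']
  congr 1 <;> ring

lemma aux_beta (s : ℝ) (hs : 0 < s) :
    IntervalIntegrable (fun θ : ℝ => (((Real.sin θ) ^ (2 * s - 1) : ℝ) : ℂ)) volume 0 π ∧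
    ∫ θ in (0:ℝ)..π, (((Real.sin θ) ^ (2 * s - 1) : ℝ) : ℂ) =
      (((2 : ℝ) ^ (2 * s - 1) : ℝ) : ℂ) * Complex.betaIntegral s s := by
  have hd : ∀ x ∈ Set.Ioo 0 π, HasDerivWithinAt (fun θ : ℝ => (1 - Real.cos θ) / 2)
      (Real.sin x / 2) (Set.Ioo 0 π) x := by
    intro x _
    have := (((Real.hasDerivAt_cos x).const_sub 1).div_const 2)
    simpa using this.hasDerivWithinAt
  have hinj : Set.InjOn (fun θ : ℝ => (1 - Real.cos θ) / 2) (Set.Ioo 0 π) := by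
    intro x hx y hy hxy
    apply Real.injOn_cos (Set.Ioo_subset_Icc_self hx) (Set.Ioo_subset_Icc_self hy)
    simp only at hxy
    linarith
  have hre : 0 < (s : ℂ).re := by simpa using hs
  have hc := Complex.betaIntegral_convergent hre hre
  have hne : (((1 / 2 : ℝ) ^ (2 * s - 1) : ℝ) : ℂ) ≠ 0 := by
    norm_cast
    positivity
  constructor
  · rw [intervalIntegrable_iff_integrableOn_Ioo_of_le zero_le_one, ← aux_image,
      integrableOn_image_iff_integrableOn_abs_deriv_smul measurableSet_Ioo hd hinj,
      integrableOn_congr_fun (fun x hx => aux_pt s x hx) measurableSet_Ioo] at hc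
    rw [intervalIntegrable_iff_integrableOn_Ioo_of_le Real.pi_pos.le]
    have := hc.const_mul ((((1 / 2 : ℝ) ^ (2 * s - 1) : ℝ) : ℂ)⁻¹)
    refine this.congr (Filter.Eventually.of_forall fun x => ?_)
    simp only
    rw [inv_mul_cancel_left₀ hne]
  · rw [Complex.betaIntegral, intervalIntegral.integral_of_le zero_le_one,
      integral_Ioc_eq_integral_Ioo, ← aux_image,
      integral_image_eq_integral_abs_deriv_smul measurableSet_Ioo hd hinj,
      setIntegral_congr_fun measurableSet_Ioo (fun x hx => aux_pt s x hx),
      integral_const_mul, intervalIntegral.integral_of_le Real.pi_pos.le,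
      integral_Ioc_eq_integral_Ioo, ← mul_assoc]
    have : (((2 : ℝ) ^ (2 * s - 1) : ℝ) : ℂ) * (((1 / 2 : ℝ) ^ (2 * s - 1) : ℝ) : ℂ) = 1 := by
      norm_cast
      rw [← Real.mul_rpow (by norm_num) (by norm_num)]
      norm_num
    rw [this, one_mul]

/-- the reduced integrand -/
noncomputable def auxF (Δ : ℝ) (m : ℕ) (θ : ℝ) : ℂ :=
  (((Real.sin θ) ^ (-(2 * Δ)) : ℝ) : ℂ) * Complex.exp (Complex.I * m * θ)

lemma auxF_int (Δ : ℝ) (hΔ : Δ < 1 / 2) (m : ℕ) :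
    IntervalIntegrable (auxF Δ m) volume 0 π := by
  have := (aux_beta (1 / 2 - Δ) (by linarith)).1
  have e : 2 * (1 / 2 - Δ) - 1 = -(2 * Δ) := by ring
  rw [e] at this
  exact this.mul_continuousOn (by fun_prop)

lemma aux_ftc (Δ : ℝ) (hΔ : Δ < 1 / 2) (m : ℕ) :
    (1 - 2 * Δ + (m + 1)) * ∫ θ in (0:ℝ)..π, auxF Δ (m + 2) θ =
     -((1 - 2 * Δ - (m + 1)) * ∫ θ in (0:ℝ)..π, auxF Δ m θ) := by
  have h := intervalIntegral.integral_eq_sub_of_hasDerivAt_of_le (a := 0) (b := π) 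
    (f := fun θ : ℝ => (((Real.sin θ) ^ (1 - 2 * Δ) : ℝ) : ℂ) * Complex.exp (Complex.I * ((m + 1 : ℕ) : ℂ) * θ))
    (f' := fun θ : ℝ => ((1 - 2 * Δ + (m + 1)) / 2) * auxF Δ (m + 2) θ + 
      ((1 - 2 * Δ - (m + 1)) / 2) * auxF Δ m θ) Real.pi_pos.le ?_ ?_ ?_
  · rw [intervalIntegral.integral_add ((auxF_int Δ hΔ _).const_mul _) 
      ((auxF_int Δ hΔ _).const_mul _), intervalIntegral.integral_const_mul,
      intervalIntegral.integral_const_mul] at h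
    simp only [Real.sin_pi, Real.sin_zero, Real.zero_rpow (show 1 - 2 * Δ ≠ 0 by linarith),
      Complex.ofReal_zero, zero_mul, sub_zero] at h
    linear_combination 2 * h
  · apply ContinuousOn.mul _ (by fun_prop)
    apply Continuous.continuousOn
    apply Complex.continuous_ofReal.comp
    exact Real.continuous_sin.rpow_const (fun x => Or.inr (by linarith))
  · intro x hx
    have hs := Real.sin_pos_of_mem_Ioo hx
    have h1 := ((Real.hasDerivAt_sin x).rpow_const (p := 1 - 2 * Δ) (Or.inl hs.ne')).ofReal_comp
    have h2 : HasDerivAt (fun θ : ℝ => Complex.exp (Complex.I * ((m + 1 : ℕ) : ℂ) * θ))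
        (Complex.exp (Complex.I * ((m + 1 : ℕ) : ℂ) * x) * (Complex.I * ((m + 1 : ℕ) : ℂ) * 1)) x := by
      have := ((Complex.ofRealCLM.hasDerivAt (x := x)).const_mul (Complex.I * ((m + 1 : ℕ) : ℂ))).cexp
      simpa using this
    convert! h1.mul h2 using 1
    have e1 : 1 - 2 * Δ - 1 = -(2 * Δ) := by ring
    have e2 : Real.sin x ^ (1 - 2 * Δ) = Real.sin x ^ (-(2 * Δ)) * Real.sin x := by
      rw [← Real.rpow_add_one hs.ne']; congr 1; ring
    have e3 : Complex.exp (Complex.I * ((m + 2 : ℕ) : ℂ) * x) =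
        Complex.exp (Complex.I * ((m + 1 : ℕ) : ℂ) * x) * (Complex.cos x + Complex.sin x * Complex.I) := by
      rw [← Complex.exp_mul_I, ← Complex.exp_add]; congr 1; push_cast; ring
    have e4 : Complex.exp (Complex.I * (m : ℂ) * x) =
        Complex.exp (Complex.I * ((m + 1 : ℕ) : ℂ) * x) * (Complex.cos x - Complex.sin x * Complex.I) := by
      have : Complex.cos x - Complex.sin x * Complex.I = Complex.exp (-x * Complex.I) := by
        rw [Complex.exp_mul_I, Complex.cos_neg, Complex.sin_neg]; ring
      rw [this, ← Complex.exp_add]; congr 1; push_cast; ring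
    rw [auxF, auxF, e1, e2, e3, e4]
    push_cast
    ring
  · exact ((auxF_int Δ hΔ _).const_mul _).add ((auxF_int Δ hΔ _).const_mul _)

lemma aux_zero (Δ : ℝ) (h0 : 0 < Δ) (hΔ : Δ < 1 / 2) :
    ∫ θ in (0:ℝ)..π, auxF Δ 1 θ = Complex.I * ((2 ^ (1 - 2 * Δ) : ℝ) : ℂ) * 
      Complex.betaIntegral (1 - Δ : ℝ) (1 - Δ : ℝ) := by
  have hb := aux_beta (1 - Δ) (by linarith)
  have e : 2 * (1 - Δ) - 1 = 1 - 2 * Δ := by ring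
  rw [e] at hb
  have h := intervalIntegral.integral_eq_sub_of_hasDerivAt_of_le (a := 0) (b := π) 
    (f := fun θ : ℝ => (((Real.sin θ) ^ (1 - 2 * Δ) : ℝ) : ℂ))
    (f' := fun θ : ℝ => (1 - 2 * Δ) * (auxF Δ 1 θ - Complex.I * ((Real.sin θ ^ (1 - 2 * Δ) : ℝ) : ℂ)))
     Real.pi_pos.le ?_ ?_ ?_
  · rw [intervalIntegral.integral_const_mul, intervalIntegral.integral_sub (auxF_int Δ hΔ _) 
      (hb.1.const_mul _), intervalIntegral.integral_const_mul, hb.2] at h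
    simp only [Real.sin_pi, Real.sin_zero, Real.zero_rpow (show 1 - 2 * Δ ≠ 0 by linarith),
      Complex.ofReal_zero, sub_zero] at h
    have hne : (1 - 2 * (Δ : ℂ)) ≠ 0 := by
      norm_cast
      linarith
    have := (mul_eq_zero.1 h).resolve_left hne
    linear_combination this
  · apply Continuous.continuousOn
    apply Complex.continuous_ofReal.comp
    exact Real.continuous_sin.rpow_const (fun x => Or.inr (by linarith))
  · intro x hx
    have hs := Real.sin_pos_of_mem_Ioo hx
    have h1 := ((Real.hasDerivAt_sin x).rpow_const (p := 1 - 2 * Δ) (Or.inl hs.ne')).ofReal_comp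
    convert! h1 using 1
    have e1 : 1 - 2 * Δ - 1 = -(2 * Δ) := by ring
    have e2 : Real.sin x ^ (1 - 2 * Δ) = Real.sin x ^ (-(2 * Δ)) * Real.sin x := by
      rw [← Real.rpow_add_one hs.ne']; congr 1; ring
    have e3 : Complex.exp (Complex.I * ((1 : ℕ) : ℂ) * x) =
        (Complex.cos x + Complex.sin x * Complex.I) := by
      rw [← Complex.exp_mul_I]; congr 1; push_cast; ring
    rw [auxF, e1, e2, e3]
    push_cast
    ring
  · exact ((auxF_int Δ hΔ _).sub (hb.1.const_mul _)).const_mul _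

lemma aux_main (Δ : ℝ) (h0 : 0 < Δ) (hΔ : Δ < 1 / 2) (n : ℕ) :
    ∫ θ in (0:ℝ)..π, auxF Δ (2 * n + 1) θ = 
      Complex.I * π * ((Real.sin (π * Δ) : ℝ) : ℂ)⁻¹ * ((2 ^ (2 * Δ - 1) : ℝ) : ℂ) * 
        Complex.Gamma (Δ + (n + 1 / 2)) / 
          (Complex.Gamma ((2 * Δ : ℝ) : ℂ) * Complex.Gamma (1 - Δ + (n + 1 / 2))) := by
  have g2 : Complex.Gamma ((2 * Δ : ℝ) : ℂ) ≠ 0 :=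
    Complex.Gamma_ne_zero_of_re_pos (by simpa using h0)
  induction n with
  | zero =>
    rw [mul_zero, zero_add, aux_zero Δ h0 hΔ]
    have hre : 0 < (((1 - Δ : ℝ)) : ℂ).re := by simp; linarith
    have b := Complex.Gamma_mul_Gamma_eq_betaIntegral hre hre
    have d1 := Complex.Gamma_mul_Gamma_add_half ((1 - Δ : ℝ) : ℂ)
    have d2 := Complex.Gamma_mul_Gamma_add_half (Δ : ℂ)
    have r := Complex.Gamma_mul_Gamma_one_sub (Δ : ℂ)
    have p1 : (2:ℂ) ^ (1 - 2 * (Δ:ℂ)) = ((2 ^ (1 - 2 * Δ) : ℝ) : ℂ) := by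
      rw [Complex.ofReal_cpow (by norm_num)]; push_cast; rfl
    have p2 : (2:ℂ) ^ (1 - 2 * ((1 - Δ : ℝ):ℂ)) = ((2 ^ (2 * Δ - 1) : ℝ) : ℂ) := by
      rw [Complex.ofReal_cpow (by norm_num)]; push_cast; congr 1; ring
    have p3 : ((2 ^ (1 - 2 * Δ) : ℝ) : ℂ) * ((2 ^ (2 * Δ - 1) : ℝ) : ℂ) = 1 := by
      norm_cast
      rw [← Real.rpow_add (by norm_num)]
      norm_num
    rw [p2, show 2 * ((1 - Δ : ℝ) : ℂ) = ((1 - Δ : ℝ) : ℂ) + ((1 - Δ : ℝ) : ℂ) by ring] at d1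
    rw [p1] at d2
    have c1 : (1 - (Δ:ℂ) + (((0:ℕ):ℂ) + 1 / 2)) = ((1 - Δ : ℝ) : ℂ) + 1 / 2 := by push_cast; ring
    have c2 : ((Δ:ℂ) + (((0:ℕ):ℂ) + 1 / 2)) = Δ + 1 / 2 := by push_cast; ring
    have c3 : ((Real.sin (π * Δ) : ℝ) : ℂ) = Complex.sin (π * Δ) := by push_cast; rfl
    have c4 : 1 - (Δ : ℂ) = ((1 - Δ : ℝ) : ℂ) := by push_cast; rfl
    have c5 : ((2 * Δ : ℝ) : ℂ) = 2 * (Δ:ℂ) := by push_cast; rfl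
    rw [c1, c2, c3, c5]
    rw [c4] at r
    rw [c5] at g2
    have gA : Complex.Gamma ((1 - Δ : ℝ) : ℂ) ≠ 0 := Complex.Gamma_ne_zero_of_re_pos hre
    have gB : Complex.Gamma (((1 - Δ : ℝ) : ℂ) + ((1 - Δ : ℝ) : ℂ)) ≠ 0 := 
      Complex.Gamma_ne_zero_of_re_pos (by simp; linarith)
    have gC : Complex.Gamma (((1 - Δ : ℝ) : ℂ) + 1 / 2) ≠ 0 := 
      Complex.Gamma_ne_zero_of_re_pos (by simp; linarith)
    have gD : Complex.Gamma (Δ : ℂ) ≠ 0 := 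
      Complex.Gamma_ne_zero_of_re_pos (by simp; linarith)
    rw [mul_assoc Complex.I (π : ℂ), ← div_eq_mul_inv, ← r, eq_div_iff (mul_ne_zero g2 gC)]
    generalize Complex.betaIntegral ((1 - Δ : ℝ) : ℂ) ((1 - Δ : ℝ) : ℂ) = B at *
    generalize Complex.Gamma (((1 - Δ : ℝ) : ℂ) + 1 / 2) = C at *
    generalize Complex.Gamma (((1 - Δ : ℝ) : ℂ) + ((1 - Δ : ℝ) : ℂ)) = E at *
    generalize Complex.Gamma ((1 - Δ : ℝ) : ℂ) = A at *
    generalize Complex.Gamma (Δ : ℂ) = D at *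
    generalize Complex.Gamma ((Δ : ℂ) + 1 / 2) = H at *
    generalize Complex.Gamma (2 * (Δ : ℂ)) = G at *
    generalize ((2 ^ (1 - 2 * Δ) : ℝ) : ℂ) = P at *
    generalize ((2 ^ (2 * Δ - 1) : ℝ) : ℂ) = Q at *
    generalize ((√π : ℝ) : ℂ) = R at *
    -- `b : A*A = E*B`, `d1 : A*C = E*Q*R`, `d2 : D*H = G*P*R`, `p3 : P*Q = 1`
    have key : B * C = A * Q * R := by
      apply mul_left_cancel₀ gB
      linear_combination A * d1 - C * b
    linear_combination Complex.I * P * G * key - Complex.I * A * Q * d2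
  | succ n ih =>
    have h := aux_ftc Δ hΔ (2 * n + 1)
    rw [ih] at h
    have hx : (Δ : ℂ) + (n + 1 / 2) ≠ 0 := by
      have : Δ + ((n : ℝ) + 1 / 2) ≠ 0 := by positivity
      intro h
      apply this
      have := congrArg Complex.re h
      simpa using this
    have hy : 1 - (Δ : ℂ) + (n + 1 / 2) ≠ 0 := by
      have : 0 < 1 - Δ + (n + 1 / 2) := by
        have : (0:ℝ) ≤ n := n.cast_nonneg
        linarith
      intro h
      apply this.ne'
      have := congrArg Complex.re h
      simpa using this
    have gy : Complex.Gamma (1 - (Δ : ℂ) + (n + 1 / 2)) ≠ 0 := 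
      Complex.Gamma_ne_zero_of_re_pos (by
        simp
        have : (0:ℝ) ≤ n := n.cast_nonneg
        linarith)
    rw [show (Δ : ℂ) + (((n + 1 : ℕ) : ℂ) + 1 / 2) = (Δ : ℂ) + (n + 1 / 2) + 1 by push_cast; ring,
      show 1 - (Δ : ℂ) + (((n + 1 : ℕ) : ℂ) + 1 / 2) = 1 - (Δ : ℂ) + (n + 1 / 2) + 1 by
        push_cast; ring, Complex.Gamma_add_one _ hx, Complex.Gamma_add_one _ hy,
        show 2 * (n + 1) + 1 = 2 * n + 1 + 2 by ring]
    apply mul_left_cancel₀ hy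
    have h' : (1 - (Δ : ℂ) + (n + 1 / 2)) * ∫ θ in (0:ℝ)..π, auxF Δ (2 * n + 1 + 2) θ = 
        ((Δ : ℂ) + (n + 1 / 2)) * (Complex.I * π * ((Real.sin (π * Δ) : ℝ) : ℂ)⁻¹ * ((2 ^ (2 * Δ - 1) : ℝ) : ℂ) * 
        Complex.Gamma (Δ + (n + 1 / 2)) / 
          (Complex.Gamma ((2 * Δ : ℝ) : ℂ) * Complex.Gamma (1 - Δ + (n + 1 / 2)))) := by
      push_cast at h ⊢
      linear_combination h / 2
    rw [h']
    generalize ((Real.sin (π * Δ) : ℝ) : ℂ)⁻¹ = S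
    generalize Complex.Gamma (1 - (Δ : ℂ) + (n + 1 / 2)) = Y at *
    generalize Complex.Gamma ((Δ : ℂ) + (n + 1 / 2)) = X at *
    generalize 1 - (Δ : ℂ) + (n + 1 / 2) = y at *
    generalize (Δ : ℂ) + (n + 1 / 2) = x at *
    field_simp

theorem matsubara_conformal_fourier (β Δ : ℝ) (hβ : 0 < β)
    (hΔ : Δ ∈ Set.Ioo (0 : ℝ) (1 / 2)) (n : ℕ) (ω : ℝ)
    (hω : ω = (2 * π / β) * ((n : ℝ) + 1 / 2)) :
    IntervalIntegrable
        (fun τ : ℝ =>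
          ((π / (β * Real.sin (π * τ / β))) ^ (2 * Δ) : ℝ) •
            Complex.exp (Complex.I * (ω : ℂ) * (τ : ℂ)))
        volume 0 β ∧
      ∫ τ in (0 : ℝ)..β,
          ((π / (β * Real.sin (π * τ / β))) ^ (2 * Δ) : ℝ) •
            Complex.exp (Complex.I * (ω : ℂ) * (τ : ℂ)) =
        Complex.I * (π : ℂ) * ((Real.sin (π * Δ) : ℝ) : ℂ)⁻¹ *
            (((2 * π / β) ^ (2 * Δ - 1) : ℝ) : ℂ) *
            Complex.Gamma ((Δ : ℂ) + (β : ℂ) * (ω : ℂ) / (2 * (π : ℂ))) /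
          (Complex.Gamma ((2 * Δ : ℝ) : ℂ) *
            Complex.Gamma (1 - (Δ : ℂ) + (β : ℂ) * (ω : ℂ) / (2 * (π : ℂ)))) := by
  obtain ⟨h0, h1⟩ := hΔ
  have hπ := Real.pi_pos
  have hc : 0 < π / β := by positivity
  have hβ' : (β : ℂ) ≠ 0 := by exact_mod_cast hβ.ne'
  have hπ' : (π : ℂ) ≠ 0 := by exact_mod_cast hπ.ne'
  have key : Set.EqOn (fun τ : ℝ =>
      (((π / β) ^ (2 * Δ) : ℝ) : ℂ) * auxF Δ (2 * n + 1) (π / β * τ)) (fun τ : ℝ =>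
          ((π / (β * Real.sin (π * τ / β))) ^ (2 * Δ) : ℝ) •
            Complex.exp (Complex.I * (ω : ℂ) * (τ : ℂ))) (Set.Ioo 0 β) := by
    intro τ hτ
    have e1 : π * τ / β = π / β * τ := by ring
    have hs : 0 < Real.sin (π / β * τ) := by
      apply Real.sin_pos_of_mem_Ioo
      refine ⟨mul_pos hc hτ.1, ?_⟩
      calc π / β * τ < π / β * β := mul_lt_mul_of_pos_left hτ.2 hc
        _ = π := by field_simp
    simp only [auxF, Complex.real_smul]
    rw [e1, ← mul_assoc]
    congr 1
    · norm_cast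
      rw [Real.rpow_neg hs.le, ← div_eq_mul_inv, ← Real.div_rpow hc.le hs.le, div_div]
    · congr 1
      rw [hω]
      push_cast
      field_simp
  have hcb : π / β * β = π := by field_simp
  have hint : IntervalIntegrable (fun τ : ℝ =>
      (((π / β) ^ (2 * Δ) : ℝ) : ℂ) * auxF Δ (2 * n + 1) (π / β * τ)) volume 0 β := by
    have := (auxF_int Δ h1 (2 * n + 1)).comp_mul_left (c := π / β)
    rw [zero_div, show π / (π / β) = β by field_simp] at this
    exact this.const_mul _
  constructor
  · rw [intervalIntegrable_iff_integrableOn_Ioo_of_le hβ.le] at hint ⊢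
    exact hint.congr_fun key measurableSet_Ioo
  · rw [intervalIntegral.integral_of_le hβ.le, integral_Ioc_eq_integral_Ioo,
      ← setIntegral_congr_fun measurableSet_Ioo key, ← integral_Ioc_eq_integral_Ioo,
      ← intervalIntegral.integral_of_le hβ.le, intervalIntegral.integral_const_mul,
      intervalIntegral.integral_comp_mul_left _ hc.ne', mul_zero, hcb, aux_main Δ h0 h1]
    have e : (β : ℂ) * (ω : ℂ) / (2 * (π : ℂ)) = n + 1 / 2 := by
      rw [hω]; push_cast; field_simp
    rw [e, Complex.real_smul]
    have e2 : (2 * π / β) ^ (2 * Δ - 1) = (π / β) ^ (2 * Δ) * (π / β)⁻¹ * 2 ^ (2 * Δ - 1) := by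
      rw [mul_div_assoc, Real.mul_rpow (by norm_num) hc.le, Real.rpow_sub_one hc.ne']
      ring
    have e3 := congrArg (fun x : ℝ => (x : ℂ)) e2
    simp only [Complex.ofReal_mul _ (2 ^ (2 * Δ - 1)), Complex.ofReal_mul _ (π / β)⁻¹] at e3
    rw [e3]
    generalize (((π / β)⁻¹ : ℝ) : ℂ) = u
    generalize (((π / β) ^ (2 * Δ) : ℝ) : ℂ) = v
    ring
end

section
/- Let β > 0 and ν ∈ (0,1), and define g(τ) = 2 log( cos(πν/2) / cos(πν(1/2 − τ/β)) ) for τ ∈ (0, β). Then g satisfies the Liouville equation g''(τ) = (2π²ν²/(β² cos²(πν/2))) e^{g(τ)} on (0, β), and g(τ) → 0 both as τ → 0⁺ and as τ → β⁻. -/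
open Real Filter

/-- The thermal large-`q` solution: `g(τ) = 2 log(cos(πν/2) / cos(πν(1/2 − τ/β)))`
satisfies the Liouville equation `g'' = (2π²ν²/(β² cos²(πν/2))) e^g` on `(0, β)`,
with boundary values `g → 0` as `τ → 0⁺` and as `τ → β⁻`. -/
theorem thermal_largeq_liouville (β ν : ℝ) (hβ : 0 < β) (hν : ν ∈ Set.Ioo (0 : ℝ) 1) :
    (∀ τ ∈ Set.Ioo (0 : ℝ) β,
        deriv (deriv (fun τ : ℝ =>
            2 * Real.log (Real.cos (π * ν / 2) / Real.cos (π * ν * (1 / 2 - τ / β))))) τ =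
          (2 * π ^ 2 * ν ^ 2 / (β ^ 2 * (Real.cos (π * ν / 2)) ^ 2)) *
            Real.exp (2 * Real.log
              (Real.cos (π * ν / 2) / Real.cos (π * ν * (1 / 2 - τ / β))))) ∧
    Tendsto (fun τ : ℝ =>
        2 * Real.log (Real.cos (π * ν / 2) / Real.cos (π * ν * (1 / 2 - τ / β))))
      (nhdsWithin 0 (Set.Ioi 0)) (nhds 0) ∧
    Tendsto (fun τ : ℝ =>
        2 * Real.log (Real.cos (π * ν / 2) / Real.cos (π * ν * (1 / 2 - τ / β))))
      (nhdsWithin β (Set.Iio β)) (nhds 0) := by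
  obtain ⟨hν0, hν1⟩ := hν
  have hpi := Real.pi_pos
  have hpn : 0 < π * ν := mul_pos hpi hν0
  have hpn1 : π * ν < π := by nlinarith
  have hC : 0 < Real.cos (π * ν / 2) :=
    Real.cos_pos_of_mem_Ioo ⟨by linarith, by linarith⟩
  have hc : ∀ t ∈ Set.Icc (0 : ℝ) β, 0 < Real.cos (π * ν * (1 / 2 - t / β)) := by
    intro t ht
    have h0 : 0 ≤ t / β := div_nonneg ht.1 hβ.le
    have h1 : t / β ≤ 1 := (div_le_one hβ).2 ht.2
    exact Real.cos_pos_of_mem_Ioo ⟨by nlinarith, by nlinarith⟩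
  have hu : ∀ t : ℝ, HasDerivAt (fun t : ℝ => π * ν * (1 / 2 - t / β)) (-(π * ν / β)) t := by
    intro t
    have h := (((hasDerivAt_id t).div_const β).const_sub (1 / 2)).const_mul (π * ν)
    exact h.congr_deriv (by ring)
  have hg : ∀ t ∈ Set.Icc (0 : ℝ) β, HasDerivAt (fun τ : ℝ =>
      2 * Real.log (Real.cos (π * ν / 2) / Real.cos (π * ν * (1 / 2 - τ / β))))
      (-(2 * (π * ν / β)) * Real.tan (π * ν * (1 / 2 - t / β))) t := by
    intro t ht
    have hct := hc t ht
    have h := ((((hasDerivAt_const t (Real.cos (π * ν / 2))).div (hu t).cos hct.ne').log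
      (div_pos hC hct).ne').const_mul 2)
    refine h.congr_deriv ?_
    simp only [Pi.div_apply]
    rw [Real.tan_eq_sin_div_cos]
    generalize Real.cos (π * ν * (1 / 2 - t / β)) = c at *
    generalize Real.sin (π * ν * (1 / 2 - t / β)) = s at *
    generalize Real.cos (π * ν / 2) = C at *
    field_simp
    ring
  refine ⟨?_, ?_, ?_⟩
  · intro τ hτ
    have hct := hc τ ⟨hτ.1.le, hτ.2.le⟩
    have he : deriv (fun τ : ℝ =>
        2 * Real.log (Real.cos (π * ν / 2) / Real.cos (π * ν * (1 / 2 - τ / β))))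
        =ᶠ[nhds τ] fun t => -(2 * (π * ν / β)) * Real.tan (π * ν * (1 / 2 - t / β)) := by
      filter_upwards [Ioo_mem_nhds hτ.1 hτ.2] with t ht
      exact (hg t ⟨ht.1.le, ht.2.le⟩).deriv
    rw [he.deriv_eq]
    have h2 := ((Real.hasDerivAt_tan hct.ne').comp τ (hu τ)).const_mul (-(2 * (π * ν / β)))
    have h3 := h2.deriv
    simp only [Function.comp_def] at h3
    rw [h3, two_mul (Real.log _), Real.exp_add, Real.exp_log (div_pos hC hct)]
    generalize Real.cos (π * ν * (1 / 2 - τ / β)) = c at *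
    generalize Real.cos (π * ν / 2) = C at *
    field_simp
  · have h := (hg 0 ⟨le_rfl, hβ.le⟩).continuousAt.tendsto
    have e : π * ν * (1 / 2 - 0 / β) = π * ν / 2 := by ring
    rw [e, div_self hC.ne', Real.log_one, mul_zero] at h
    exact h.mono_left nhdsWithin_le_nhds
  · have h := (hg β ⟨hβ.le, le_rfl⟩).continuousAt.tendsto
    have e : π * ν * (1 / 2 - β / β) = -(π * ν / 2) := by rw [div_self hβ.ne']; ring
    rw [e, Real.cos_neg, div_self hC.ne', Real.log_one, mul_zero] at h
    exact h.mono_left nhdsWithin_le_nhds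
end

section
/- Fix μ ∈ [0, 2] and define Φ_μ(ν) = (πν / cos(πν/2))² · (πν / sin(πν))^{μ/2 − 1} for ν ∈ (0,1). Then Φ_μ is strictly increasing on (0,1). -/
open Real

theorem aux_mul_rpow_lt {A A' r r' t : ℝ} (hA : 0 < A) (hr : 0 < r) (hr' : 0 < r')
    (h1 : A < A') (h2 : A / r < A' / r') (ht0 : 0 ≤ t) (ht1 : t ≤ 1) :
    A * r ^ (t - 1) < A' * r' ^ (t - 1) := by
  rcases le_total r' r with h | h
  · have h3 : r ^ (t - 1) ≤ r' ^ (t - 1) :=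
      Real.rpow_le_rpow_of_nonpos hr' h (by linarith)
    exact mul_lt_mul h1 h3 (Real.rpow_pos_of_pos hr _) (by linarith)
  · have h3 : r ^ t ≤ r' ^ t := Real.rpow_le_rpow hr.le h ht0
    have e : ∀ a s : ℝ, 0 < s → a * s ^ (t - 1) = a / s * s ^ t := by
      intro a s hs
      rw [Real.rpow_sub_one hs.ne']
      ring
    rw [e A r hr, e A' r' hr']
    exact mul_lt_mul h2 h3 (Real.rpow_pos_of_pos hr _) ((div_pos hA hr).trans h2).le

/-- The large-`q` closure function `Φ_μ(ν) = (πν/cos(πν/2))² (πν/sin(πν))^{μ/2−1}`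
is strictly increasing on `(0,1)` for every `μ ∈ [0,2]`. -/
theorem closure_function_strictMono (μ : ℝ) (hμ : μ ∈ Set.Icc (0 : ℝ) 2) :
    StrictMonoOn (fun ν : ℝ =>
        (π * ν / Real.cos (π * ν / 2)) ^ 2 *
          (π * ν / Real.sin (π * ν)) ^ (μ / 2 - 1))
      (Set.Ioo (0 : ℝ) 1) := by
  intro a ha b hb hab
  obtain ⟨hm0, hm2⟩ := hμ
  have hpi := Real.pi_pos
  have hx0 : 0 < π * a := mul_pos hpi ha.1
  have hxy : π * a < π * b := mul_lt_mul_of_pos_left hab hpi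
  have hy1 : π * b < π := by nlinarith [hb.2]
  show (π * a / Real.cos (π * a / 2)) ^ 2 * (π * a / Real.sin (π * a)) ^ (μ / 2 - 1) <
    (π * b / Real.cos (π * b / 2)) ^ 2 * (π * b / Real.sin (π * b)) ^ (μ / 2 - 1)
  generalize π * a = x at *
  generalize π * b = y at *
  have hcy : 0 < Real.cos (y / 2) := Real.cos_pos_of_mem_Ioo ⟨by linarith, by linarith⟩
  have hcc : Real.cos (y / 2) < Real.cos (x / 2) :=
    Real.cos_lt_cos_of_nonneg_of_le_pi (by linarith) (by linarith) (by linarith)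
  have hcx := hcy.trans hcc
  have hsx : 0 < Real.sin x := Real.sin_pos_of_pos_of_lt_pi hx0 (by linarith)
  have hsy : 0 < Real.sin y := Real.sin_pos_of_pos_of_lt_pi (by linarith) (by linarith)
  have hdiv : x / Real.cos (x / 2) < y / Real.cos (y / 2) :=
    div_lt_div₀ hxy hcc.le (by linarith) hcy
  have key : ∀ z : ℝ, 0 < z → 0 < Real.cos (z / 2) → 0 < Real.sin z →
      (z / Real.cos (z / 2)) ^ 2 / (z / Real.sin z) = 2 * (z * Real.tan (z / 2)) := by
    intro z hz hc hs
    have h2 : Real.sin z = 2 * Real.sin (z / 2) * Real.cos (z / 2) := by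
      rw [← Real.sin_two_mul]; congr 1; ring
    rw [Real.tan_eq_sin_div_cos, div_div_eq_mul_div, h2]
    field_simp
  have ht : Real.tan (x / 2) < Real.tan (y / 2) :=
    Real.tan_lt_tan_of_lt_of_lt_pi_div_two (by linarith) (by linarith) (by linarith)
  have htx : 0 < Real.tan (x / 2) :=
    Real.tan_pos_of_pos_of_lt_pi_div_two (by linarith) (by linarith)
  have hx' := div_pos hx0 hcx
  refine aux_mul_rpow_lt (pow_pos hx' 2) (div_pos hx0 hsx)
    (div_pos (hx0.trans hxy) hsy) (pow_lt_pow_left₀ hdiv hx'.le two_ne_zero) ?_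
    (by linarith) (by linarith)
  rw [key x hx0 hcx hsx, key y (hx0.trans hxy) hcy hsy]
  have := mul_lt_mul hxy ht.le htx (hx0.trans hxy).le
  linarith
end

section
/- Fix μ ∈ (0, 2], an integer q ≥ 1 and J > 0, define Φ_μ(ν) = (πν / cos(πν/2))² · (πν / sin(πν))^{μ/2 − 1} for ν ∈ (0,1), and for each β > 0 let ν(β) denote the unique ν ∈ (0,1) satisfying μ q (β² J² / 2^q)^{μ/2} = Φ_μ(ν). Then the function β ↦ ν(β) is strictly increasing on (0, ∞). -/
open Real

lemma aux_eq (m y : ℝ) (h0 : 0 < y) (h1 : y < π) :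
    (y / Real.cos (y / 2)) ^ 2 * (y / Real.sin y) ^ (m - 1) =
      2 * y * Real.tan (y / 2) * (y / Real.sin y) ^ m := by
  have hc : 0 < Real.cos (y / 2) := Real.cos_pos_of_mem_Ioo ⟨by linarith, by linarith⟩
  have hs : 0 < Real.sin (y / 2) := Real.sin_pos_of_pos_of_lt_pi (by linarith) (by linarith)
  have hsy : 0 < Real.sin y := Real.sin_pos_of_pos_of_lt_pi h0 h1
  have h2 : Real.sin y = 2 * Real.sin (y / 2) * Real.cos (y / 2) := by
    rw [← Real.sin_two_mul]; congr 1; ring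
  have e : (y / Real.cos (y / 2)) ^ 2 = 2 * y * Real.tan (y / 2) * (y / Real.sin y) := by
    rw [Real.tan_eq_sin_div_cos, h2]; field_simp
  have hp : 0 < y / Real.sin y := div_pos h0 hsy
  rw [Real.rpow_sub_one hp.ne', e]
  field_simp

lemma aux_mono (m a b : ℝ) (hm : 0 < m) (h0 : 0 < a) (hab : a ≤ b) (h1 : b < π) :
    (a / Real.cos (a / 2)) ^ 2 * (a / Real.sin a) ^ (m - 1) ≤
      (b / Real.cos (b / 2)) ^ 2 * (b / Real.sin b) ^ (m - 1) := by
  have hb : 0 < b := by linarith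
  have hsa : 0 < Real.sin a := Real.sin_pos_of_pos_of_lt_pi h0 (by linarith)
  have hsb : 0 < Real.sin b := Real.sin_pos_of_pos_of_lt_pi hb h1
  rw [aux_eq m a h0 (by linarith), aux_eq m b hb h1]
  have hta : 0 < Real.tan (a / 2) :=
    Real.tan_pos_of_pos_of_lt_pi_div_two (by linarith) (by linarith)
  have ht : Real.tan (a / 2) ≤ Real.tan (b / 2) :=
    Real.strictMonoOn_tan.monotoneOn ⟨by linarith, by linarith⟩ ⟨by linarith, by linarith⟩
      (by linarith)
  have hd : a / Real.sin a ≤ b / Real.sin b := by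
    rw [div_le_div_iff₀ hsa hsb]
    have hc := strictConcaveOn_sin_Icc.concaveOn.2
      (show (0 : ℝ) ∈ Set.Icc 0 π from ⟨le_rfl, Real.pi_pos.le⟩)
      (show b ∈ Set.Icc 0 π from ⟨hb.le, h1.le⟩)
      (show 0 ≤ 1 - a / b by rw [sub_nonneg, div_le_one hb]; exact hab)
      (show 0 ≤ a / b by positivity) (by ring)
    have e : a / b * b = a := by field_simp
    simp only [smul_eq_mul, mul_zero, Real.sin_zero, zero_add, e] at hc
    rw [div_mul_eq_mul_div, div_le_iff₀ hb] at hc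
    linarith
  have hp : 0 < a / Real.sin a := div_pos h0 hsa
  have hr : (a / Real.sin a) ^ m ≤ (b / Real.sin b) ^ m := Real.rpow_le_rpow hp.le hd hm.le
  have hr0 : 0 < (a / Real.sin a) ^ m := Real.rpow_pos_of_pos hp m
  have := hta.le.trans ht
  gcongr

/-- The solution `ν(β) ∈ (0,1)` of the large-`q` closure condition
`μ q (β² J² / 2^q)^{μ/2} = Φ_μ(ν(β))` is strictly increasing in `β` on `(0,∞)`. -/
theorem closure_solution_strictMono_in_beta (μ : ℝ) (hμ : μ ∈ Set.Ioc (0 : ℝ) 2)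
    (q : ℕ) (hq : 1 ≤ q) (J : ℝ) (hJ : 0 < J) (ν : ℝ → ℝ)
    (hmem : ∀ β > (0 : ℝ), ν β ∈ Set.Ioo (0 : ℝ) 1)
    (hclosure : ∀ β > (0 : ℝ),
      μ * (q : ℝ) * (β ^ 2 * J ^ 2 / 2 ^ q) ^ (μ / 2) =
        (π * ν β / Real.cos (π * ν β / 2)) ^ 2 *
          (π * ν β / Real.sin (π * ν β)) ^ (μ / 2 - 1)) :
    StrictMonoOn ν (Set.Ioi (0 : ℝ)) := by
  intro x hx y hy hxy
  simp only [Set.mem_Ioi] at hx hy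
  by_contra hcon
  push Not at hcon
  obtain ⟨hx0, hx1⟩ := hmem x hx
  obtain ⟨hy0, hy1⟩ := hmem y hy
  have hpi := Real.pi_pos
  have hm : 0 < μ / 2 := by linarith [hμ.1]
  have h := aux_mono (μ / 2) (π * ν y) (π * ν x) hm (by positivity)
    (by gcongr) (by nlinarith)
  rw [← hclosure x hx, ← hclosure y hy] at h
  have hq' : (0 : ℝ) < q := by exact_mod_cast hq
  have hlt : (x ^ 2 * J ^ 2 / 2 ^ q) ^ (μ / 2) < (y ^ 2 * J ^ 2 / 2 ^ q) ^ (μ / 2) := by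
    apply Real.rpow_lt_rpow (by positivity) _ hm
    gcongr
  have hpos : 0 < μ * (q : ℝ) := mul_pos hμ.1 hq'
  exact absurd h (not_le.mpr (mul_lt_mul_of_pos_left hlt hpos))
end

section
/- Fix μ ∈ (0, 2], an integer q ≥ 1 and J > 0, define Φ_μ(ν) = (πν / cos(πν/2))² · (πν / sin(πν))^{μ/2 − 1} for ν ∈ (0,1), and for each β > 0 let ν(β) denote the unique ν ∈ (0,1) satisfying μ q (β² J² / 2^q)^{μ/2} = Φ_μ(ν). Then lim_{β → 0⁺} ν(β) / β^{μ/2} = √(μ q) · J^{μ/2} / (π · 2^{q μ / 4}). -/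
open Real Filter

/-- Small-`β` scaling of the solution of the large-`q` closure condition:
`ν(β)/β^{μ/2} → √(μq) J^{μ/2} / (π 2^{qμ/4})` as `β → 0⁺`. -/
theorem closure_solution_small_beta_scaling (μ : ℝ) (hμ : μ ∈ Set.Ioc (0 : ℝ) 2)
    (q : ℕ) (hq : 1 ≤ q) (J : ℝ) (hJ : 0 < J) (ν : ℝ → ℝ)
    (hmem : ∀ β > (0 : ℝ), ν β ∈ Set.Ioo (0 : ℝ) 1)
    (hclosure : ∀ β > (0 : ℝ),
      μ * (q : ℝ) * (β ^ 2 * J ^ 2 / 2 ^ q) ^ (μ / 2) =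
        (π * ν β / Real.cos (π * ν β / 2)) ^ 2 *
          (π * ν β / Real.sin (π * ν β)) ^ (μ / 2 - 1)) :
    Tendsto (fun β : ℝ => ν β / β ^ (μ / 2)) (nhdsWithin 0 (Set.Ioi 0))
      (nhds (Real.sqrt (μ * (q : ℝ)) * J ^ (μ / 2) / (π * 2 ^ ((q : ℝ) * μ / 4)))) := by
  obtain ⟨hμ0, hμ2⟩ := hμ
  have hq0 : (0 : ℝ) < q := by exact_mod_cast hq
  set K : ℝ := Real.sqrt (μ * (q : ℝ)) * J ^ (μ / 2) / 2 ^ ((q : ℝ) * μ / 4) with hK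
  have hK0 : 0 < K := by positivity
  have hL : ∀ β > (0 : ℝ), μ * (q : ℝ) * (β ^ 2 * J ^ 2 / 2 ^ q) ^ (μ / 2)
      = (K * β ^ (μ / 2)) ^ 2 := by
    intro β hβ
    have h1 : (2 : ℝ) ^ q = ((2 : ℝ) ^ ((q : ℝ) / 2)) ^ 2 := by
      rw [← Real.rpow_natCast, ← Real.rpow_natCast, ← Real.rpow_mul (by norm_num)]
      congr 1; push_cast; ring
    have h2 : (2 : ℝ) ^ ((q : ℝ) * μ / 4) = ((2 : ℝ) ^ ((q : ℝ) / 2)) ^ (μ / 2) := by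
      rw [← Real.rpow_mul (by norm_num)]; congr 1; ring
    have h3 : β ^ 2 * J ^ 2 / 2 ^ q = (β * J / (2 : ℝ) ^ ((q : ℝ) / 2)) ^ 2 := by
      rw [h1]; ring
    have h4 : ((β * J / (2 : ℝ) ^ ((q : ℝ) / 2)) ^ 2) ^ (μ / 2)
        = ((β * J / (2 : ℝ) ^ ((q : ℝ) / 2)) ^ (μ / 2)) ^ 2 := by
      rw [← Real.rpow_natCast, ← Real.rpow_natCast, ← Real.rpow_mul (by positivity),
        ← Real.rpow_mul (by positivity), mul_comm (μ / 2)]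
    rw [h3, h4, Real.div_rpow (by positivity) (by positivity),
      Real.mul_rpow hβ.le hJ.le, hK, h2]
    simp only [div_pow, mul_pow]
    rw [Real.sq_sqrt (by positivity)]
    ring
  -- solved form
  have hS : ∀ β > (0 : ℝ), π * ν β = K * β ^ (μ / 2) *
      (Real.cos (π * ν β / 2) * (Real.sinc (π * ν β))⁻¹ ^ ((1 - μ / 2) / 2)) ∧
      π * ν β ≤ K * β ^ (μ / 2) := by
    intro β hβ
    obtain ⟨hn0, hn1⟩ := hmem β hβ
    have hc := hclosure β hβ
    rw [hL β hβ] at hc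
    have hx0 : 0 < π * ν β := by positivity
    have hxπ : π * ν β < π := by nlinarith [Real.pi_pos]
    have hB : 0 < K * β ^ (μ / 2) := by positivity
    generalize π * ν β = x at *
    generalize K * β ^ (μ / 2) = B at *
    have hcos : 0 < Real.cos (x / 2) := Real.cos_pos_of_mem_Ioo ⟨by linarith, by linarith⟩
    have hsin : 0 < Real.sin x := Real.sin_pos_of_pos_of_lt_pi hx0 hxπ
    have hy : (Real.sinc x)⁻¹ = x / Real.sin x := by
      rw [Real.sinc_of_ne_zero hx0.ne', inv_div]
    have hy1 : 1 ≤ x / Real.sin x := by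
      rw [one_le_div hsin]; exact (Real.sin_lt hx0).le
    have hy0 : 0 < x / Real.sin x := by positivity
    rw [hy]
    set r : ℝ := (x / Real.sin x) ^ ((1 - μ / 2) / 2) with hr
    have hr0 : 0 < r := by positivity
    have hr2 : r ^ 2 = (x / Real.sin x) ^ (1 - μ / 2) := by
      rw [hr, ← Real.rpow_natCast, ← Real.rpow_mul hy0.le]; congr 1; push_cast; ring
    have hr3 : (x / Real.sin x) ^ (μ / 2 - 1) = (r ^ 2)⁻¹ := by
      rw [hr2, ← Real.rpow_neg hy0.le]; congr 1; ring
    rw [hr3] at hc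
    have hxe : x = B * (Real.cos (x / 2) * r) := by
      have : B = x / (Real.cos (x / 2) * r) := by
        rw [← sq_eq_sq₀ hB.le (by positivity), hc]
        field_simp
      rw [this]; field_simp
    refine ⟨hxe, ?_⟩
    have hr4 : r ^ 2 ≤ x / Real.sin x := by
      rw [hr2]
      calc _ ≤ (x / Real.sin x) ^ (1 : ℝ) :=
            Real.rpow_le_rpow_of_exponent_le hy1 (by linarith)
        _ = _ := Real.rpow_one _
    have hcr : (Real.cos (x / 2) * r) ^ 2 ≤ 1 := by
      have ht : x / 2 * Real.cos (x / 2) ≤ Real.sin (x / 2) := by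
        have := Real.lt_tan (x := x / 2) (by linarith) (by linarith)
        rw [Real.tan_eq_sin_div_cos, lt_div_iff₀ hcos] at this
        exact this.le
      have hs2 : Real.sin x = 2 * Real.sin (x / 2) * Real.cos (x / 2) := by
        rw [← Real.sin_two_mul]; congr 1; ring
      calc (Real.cos (x / 2) * r) ^ 2 = Real.cos (x / 2) ^ 2 * r ^ 2 := by ring
        _ ≤ Real.cos (x / 2) ^ 2 * (x / Real.sin x) := by gcongr
        _ ≤ 1 := by
          rw [← mul_div_assoc, div_le_one hsin, hs2]
          nlinarith
    have hcr1 : Real.cos (x / 2) * r ≤ 1 := by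
      have : 0 < Real.cos (x / 2) * r := by positivity
      nlinarith
    calc x = B * (Real.cos (x / 2) * r) := hxe
      _ ≤ B * 1 := by gcongr
      _ = B := mul_one B
  -- the argument tends to zero
  have hx : Tendsto (fun β => π * ν β) (nhdsWithin 0 (Set.Ioi 0)) (nhds 0) := by
    have hb : Tendsto (fun β : ℝ => K * β ^ (μ / 2)) (nhdsWithin 0 (Set.Ioi 0)) (nhds 0) := by
      have h := (Real.continuousAt_rpow_const 0 (μ / 2) (Or.inr (by positivity))).tendsto.const_mul K
      rw [Real.zero_rpow (by positivity), mul_zero] at h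
      exact h.mono_left nhdsWithin_le_nhds
    refine tendsto_of_tendsto_of_tendsto_of_le_of_le' tendsto_const_nhds hb ?_ ?_
    · filter_upwards [self_mem_nhdsWithin] with β hβ
      have := (hmem β hβ).1
      positivity
    · filter_upwards [self_mem_nhdsWithin] with β hβ
      exact (hS β hβ).2
  have hg : Tendsto (fun x : ℝ => K / π *
      (Real.cos (x / 2) * (Real.sinc x)⁻¹ ^ ((1 - μ / 2) / 2))) (nhds 0) (nhds (K / π)) := by
    have h1 : Tendsto (fun x : ℝ => Real.cos (x / 2)) (nhds 0) (nhds 1) := by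
      have : Continuous fun x : ℝ => Real.cos (x / 2) := by fun_prop
      simpa using this.tendsto 0
    have h2 : Tendsto (fun x : ℝ => (Real.sinc x)⁻¹) (nhds 0) (nhds 1) := by
      have := (Real.continuous_sinc.tendsto 0).inv₀ (by simp)
      simpa using this
    have h3 := h2.rpow_const (p := (1 - μ / 2) / 2) (Or.inl one_ne_zero)
    rw [Real.one_rpow] at h3
    simpa using (h1.mul h3).const_mul (K / π)
  have hfin := hg.comp hx
  have hKe : Real.sqrt (μ * (q : ℝ)) * J ^ (μ / 2) / (π * 2 ^ ((q : ℝ) * μ / 4)) = K / π := by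
    rw [hK]; field_simp
  rw [hKe]
  refine hfin.congr' ?_
  filter_upwards [self_mem_nhdsWithin] with β hβ
  have hβ0 : (0 : ℝ) < β := hβ
  have h := (hS β hβ).1
  have hp : 0 < β ^ (μ / 2) := by positivity
  simp only [Function.comp]
  rw [eq_div_iff hp.ne']
  have hπ := Real.pi_pos
  apply mul_left_cancel₀ hπ.ne'
  generalize Real.cos (π * ν β / 2) * (Real.sinc (π * ν β))⁻¹ ^ ((1 - μ / 2) / 2) = G at h ⊢
  rw [h]
  field_simp
end

section
/- Fix μ ∈ (0, 2], a real q > 0 and J > 0. Suppose ν : (0, ∞) → (0,1) is differentiable and satisfies the closure condition μ q (β² J² / 2^q)^{μ/2} = (πν(β)/cos(πν(β)/2))² · (πν(β)/sin(πν(β)))^{μ/2 − 1} for every β > 0. Define f(β) = (1/2) ln 2 + (μπν(β)/(2q²)) · (tan(πν(β)/2) − πν(β)/4). Then for every β > 0, writing ν = ν(β): f(β) − β f'(β) = (1/2) ln 2 − (μ/2)(πν/(2q))² − [π(2 − μ)μ ν (πν + sin(πν)) tan(πν/2)] / [2q² (πν(μ cos(πν) − 2) − (μ + 2) sin(πν))].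 -/
open Real

/-- Large-`q` entropy of the Lévy SYK model: with `f(β) = −βF/N` the large-`q` free
energy expression, the entropy `f(β) − β f'(β)` has the stated closed form. -/
theorem largeq_entropy_formula (μ q J : ℝ) (hμ : μ ∈ Set.Ioc (0 : ℝ) 2)
    (hq : 0 < q) (hJ : 0 < J) (ν : ℝ → ℝ)
    (hmem : ∀ β > (0 : ℝ), ν β ∈ Set.Ioo (0 : ℝ) 1)
    (hdiff : ∀ β > (0 : ℝ), DifferentiableAt ℝ ν β)
    (hclosure : ∀ β > (0 : ℝ),
      μ * q * (β ^ 2 * J ^ 2 / (2 : ℝ) ^ q) ^ (μ / 2) =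
        (π * ν β / Real.cos (π * ν β / 2)) ^ 2 *
          (π * ν β / Real.sin (π * ν β)) ^ (μ / 2 - 1)) :
    ∀ β > (0 : ℝ),
      (fun b : ℝ => (1 / 2) * Real.log 2 +
          (μ * π * ν b / (2 * q ^ 2)) * (Real.tan (π * ν b / 2) - π * ν b / 4)) β -
        β * deriv (fun b : ℝ => (1 / 2) * Real.log 2 +
          (μ * π * ν b / (2 * q ^ 2)) * (Real.tan (π * ν b / 2) - π * ν b / 4)) β =
      (1 / 2) * Real.log 2 - (μ / 2) * (π * ν β / (2 * q)) ^ 2 -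
        (π * (2 - μ) * μ * ν β * (π * ν β + Real.sin (π * ν β)) *
            Real.tan (π * ν β / 2)) /
          (2 * q ^ 2 * (π * ν β * (μ * Real.cos (π * ν β) - 2) -
            (μ + 2) * Real.sin (π * ν β))) := by
  intro β hβ
  obtain ⟨hμ0, hμ2⟩ := hμ
  have pos : ∀ b > (0 : ℝ), 0 < π * ν b ∧ 0 < Real.cos (π * ν b / 2) ∧
      0 < Real.sin (π * ν b / 2) ∧ 0 < Real.sin (π * ν b) := by
    intro b hb
    obtain ⟨h0, h1⟩ := hmem b hb
    have hp := Real.pi_pos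
    have hx : 0 < π * ν b := by positivity
    have hx1 : π * ν b < π := by nlinarith
    refine ⟨hx, Real.cos_pos_of_mem_Ioo ⟨by linarith, by linarith⟩,
      Real.sin_pos_of_pos_of_lt_pi (by linarith) (by linarith),
      Real.sin_pos_of_pos_of_lt_pi hx hx1⟩
  have hlog : ∀ b > (0 : ℝ),
      Real.log (μ * q) + (μ / 2) * (2 * Real.log b + Real.log (J ^ 2 / (2 : ℝ) ^ q)) =
      2 * (Real.log (π * ν b) - Real.log (Real.cos (π * ν b / 2))) +
        (μ / 2 - 1) * (Real.log (π * ν b) - Real.log (Real.sin (π * ν b))) := by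
    intro b hb
    obtain ⟨hx, hc, hs, hS⟩ := pos b hb
    have h2 : (0 : ℝ) < (2 : ℝ) ^ q := Real.rpow_pos_of_pos two_pos q
    have h := congrArg Real.log (hclosure b hb)
    have hA : 0 < b ^ 2 * J ^ 2 / (2 : ℝ) ^ q := by positivity
    have hB : 0 < π * ν b / Real.sin (π * ν b) := by positivity
    rw [Real.log_mul (by positivity) (Real.rpow_pos_of_pos hA _).ne',
      Real.log_mul (by positivity) (Real.rpow_pos_of_pos hB _).ne',
      Real.log_rpow hA, Real.log_rpow hB, Real.log_pow, Real.log_div hx.ne' hc.ne',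
      Real.log_div hx.ne' hS.ne', mul_div_assoc,
      Real.log_mul (x := b ^ 2) (by positivity) (by positivity), Real.log_pow] at h
    exact_mod_cast h
  obtain ⟨hx, hc, hs, hS⟩ := pos β hβ
  obtain ⟨x', hx'⟩ : ∃ x', HasDerivAt (fun b => π * ν b) x' β :=
    ⟨_, ((hdiff β hβ).hasDerivAt.const_mul π)⟩
  have hh : HasDerivAt (fun b => π * ν b / 2) (x' / 2) β := hx'.div_const 2
  have hL : HasDerivAt (fun b => Real.log (μ * q) +
      (μ / 2) * (2 * Real.log b + Real.log (J ^ 2 / (2 : ℝ) ^ q)))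
      ((μ / 2) * (2 * β⁻¹)) β :=
    ((((Real.hasDerivAt_log hβ.ne').const_mul 2).add_const _).const_mul _).const_add _
  have hR := (((hx'.log hx.ne').sub (hh.cos.log hc.ne')).const_mul 2).add
    (((hx'.log hx.ne').sub (hx'.sin.log hS.ne')).const_mul (μ / 2 - 1))
  have hev := Filter.EventuallyEq.symm (Filter.eventuallyEq_of_mem (Ioi_mem_nhds hβ) hlog)
  have key := hL.unique (hR.congr_of_eventuallyEq hev.symm)
  have hf := ((hx'.const_mul (μ / (2 * q ^ 2))).mul
    (((Real.hasDerivAt_tan hc.ne').comp β hh).sub (hx'.div_const 4))).const_add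
      ((1 / 2) * Real.log 2)
  have hfe : (fun b : ℝ => (1 / 2) * Real.log 2 +
          (μ * π * ν b / (2 * q ^ 2)) * (Real.tan (π * ν b / 2) - π * ν b / 4)) =
      (fun b : ℝ => (1 / 2) * Real.log 2 + (μ / (2 * q ^ 2) * (π * ν b)) *
        (Real.tan (π * ν b / 2) - π * ν b / 4)) := by
    funext b; ring
  have hd : deriv (fun b : ℝ => (1 / 2) * Real.log 2 +
          (μ * π * ν b / (2 * q ^ 2)) * (Real.tan (π * ν b / 2) - π * ν b / 4)) β =
      μ / (2 * q ^ 2) * x' * (Real.tan (π * ν β / 2) - π * ν β / 4) +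
      μ / (2 * q ^ 2) * (π * ν β) * (1 / Real.cos (π * ν β / 2) ^ 2 * (x' / 2) - x' / 4) := by
    rw [hfe]; exact hf.deriv
  rw [hd]
  beta_reduce
  have hRHS : π * (2 - μ) * μ * ν β = (2 - μ) * μ * (π * ν β) := by ring
  have hLHS : μ * π * ν β = μ * (π * ν β) := by ring
  rw [hRHS, hLHS]
  clear hd hf hfe hev hR hL hh hx' hlog pos hclosure hRHS hLHS
  generalize π * ν β = x at *
  have hE : 0 < (μ + 2) * Real.sin x - x * (μ * Real.cos x - 2) := by
    have : μ * Real.cos x ≤ 2 := by nlinarith [Real.cos_le_one x]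
    have h1 : 0 < (μ + 2) * Real.sin x := by positivity
    nlinarith
  have e1 : Real.sin x = 2 * Real.sin (x / 2) * Real.cos (x / 2) := by
    rw [← Real.sin_two_mul]; congr 1; ring
  have e2 : Real.cos x = 2 * Real.cos (x / 2) ^ 2 - 1 := by
    rw [← Real.cos_two_mul]; congr 1; ring
  have e3 := Real.sin_sq_add_cos_sq (x / 2)
  rw [Real.tan_eq_sin_div_cos]
  rw [e1, e2] at hE key
  rw [e1, e2]
  clear e1 e2 hS
  generalize Real.sin (x / 2) = s at *
  generalize Real.cos (x / 2) = c at *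
  generalize hEdef : (μ + 2) * (2 * s * c) - x * (μ * (2 * c ^ 2 - 1) - 2) = E at *
  have hx'E : β * x' = 2 * μ * x * (2 * s * c) / E := by
    rw [eq_div_iff hE.ne', ← hEdef]
    have hk : μ / 2 * (2 * β⁻¹) =
        x' * ((μ + 2) * (2 * s * c) - x * (μ * (2 * c ^ 2 - 1) - 2)) /
          (2 * x * (2 * s * c)) := by
      rw [key]
      field_simp
      linear_combination (4 * x * x') * e3
    have hk2 : μ / 2 * (2 * β⁻¹) = μ / β := by ring
    rw [hk2, div_eq_div_iff hβ.ne' (by positivity)] at hk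
    linear_combination -hk
  have hEk : E = 2 * μ * (2 * s * c) + 2 * μ * x * s ^ 2 + (2 - μ) * (x + 2 * s * c) := by
    rw [← hEdef]; linear_combination (-2 * μ * x) * e3
  have hcc : 1 / c ^ 2 = 1 + (s / c) ^ 2 := by
    field_simp; linarith
  have hT : s / c * c = s := by field_simp
  have hD : x * (μ * (2 * c ^ 2 - 1) - 2) - (μ + 2) * (2 * s * c) = -E := by
    rw [← hEdef]; ring
  rw [hcc, hD]
  generalize s / c = T at *
  have h1 : T * E = 2 * μ * (2 * s * c) * (T + x * T ^ 2 / 2) +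
      (2 - μ) * (x + 2 * s * c) * T := by
    rw [hEk]; linear_combination (-2 * μ * x * s * T) * hT
  have h2 : T = 2 * μ * (2 * s * c) * (T + x * T ^ 2 / 2) / E +
      (2 - μ) * (x + 2 * s * c) * T / E := by
    rw [← add_div, eq_div_iff hE.ne', h1]
  have h3 : (2 - μ) * μ * x * (x + 2 * s * c) * T / (2 * q ^ 2 * -E) =
      -(μ * x / (2 * q ^ 2) * ((2 - μ) * (x + 2 * s * c) * T / E)) := by
    field_simp
  rw [h3]
  linear_combination (μ * x / (2 * q ^ 2)) * h2 -
    (μ / (2 * q ^ 2) * (T + x * T ^ 2 / 2)) * hx'E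
end

section
/- Fix μ ∈ (0, 2], a real q > 0, J > 0, β > 0 and ν ∈ (0,1), and suppose the closure condition μ q (β² J² / 2^q)^{μ/2} = (πν/cos(πν/2))² · (πν/sin(πν))^{μ/2 − 1} holds. Then (β² q μ J² cos²(πν/2) / (2^{q−1} π² ν²)) · (J² β² sin(πν) / (2^{q−2} πν))^{μ/2 − 1} = 2^{μ − 1}. -/
open Real

/-- The Schrödinger coupling `s₁` of the Lévy SYK retarded-kernel problem equals
`2^{μ−1}` as a consequence of the large-`q` closure condition. -/
theorem s1_equals_two_pow (μ q J β ν : ℝ) (hμ : μ ∈ Set.Ioc (0 : ℝ) 2)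
    (hq : 0 < q) (hJ : 0 < J) (hβ : 0 < β) (hν : ν ∈ Set.Ioo (0 : ℝ) 1)
    (hclosure :
      μ * q * (β ^ 2 * J ^ 2 / (2 : ℝ) ^ q) ^ (μ / 2) =
        (π * ν / Real.cos (π * ν / 2)) ^ 2 *
          (π * ν / Real.sin (π * ν)) ^ (μ / 2 - 1)) :
    (β ^ 2 * q * μ * J ^ 2 * (Real.cos (π * ν / 2)) ^ 2 /
        ((2 : ℝ) ^ (q - 1) * π ^ 2 * ν ^ 2)) *
      (J ^ 2 * β ^ 2 * Real.sin (π * ν) / ((2 : ℝ) ^ (q - 2) * π * ν)) ^ (μ / 2 - 1) =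
    (2 : ℝ) ^ (μ - 1) := by
  obtain ⟨hν0, hν1⟩ := hν
  have hπ := Real.pi_pos
  have hs : 0 < Real.sin (π * ν) :=
    Real.sin_pos_of_pos_of_lt_pi (by positivity) (by nlinarith)
  have hc : 0 < Real.cos (π * ν / 2) :=
    Real.cos_pos_of_mem_Ioo ⟨by nlinarith [mul_pos hπ hν0], by nlinarith⟩
  have hQ : 0 < (2 : ℝ) ^ q := by positivity
  have h1 : (2 : ℝ) ^ (q - 1) = 2 ^ q / 2 := by
    rw [Real.rpow_sub (by norm_num), Real.rpow_one]
  have h2 : (2 : ℝ) ^ (q - 2) = 2 ^ q / 4 := by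
    rw [Real.rpow_sub (by norm_num), Real.rpow_two]; norm_num
  have h3 : (2 : ℝ) ^ (μ - 1) = 2 * 4 ^ (μ / 2 - 1) := by
    have : (4 : ℝ) = 2 ^ (2 : ℝ) := by rw [Real.rpow_two]; norm_num
    rw [this, ← Real.rpow_mul (by norm_num)]
    nth_rewrite 2 [← Real.rpow_one 2]
    rw [← Real.rpow_add (by norm_num)]
    congr 1; ring
  rw [h1, h2, h3]
  generalize (2 : ℝ) ^ q = Q at *
  generalize Real.sin (π * ν) = s at *
  generalize Real.cos (π * ν / 2) = c at *
  have hA : 0 < β ^ 2 * J ^ 2 / Q := by positivity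
  have hS : 0 < π * ν / s := by positivity
  have hC : 0 < π * ν / c := by positivity
  have e1 : β ^ 2 * q * μ * J ^ 2 * c ^ 2 / (Q / 2 * π ^ 2 * ν ^ 2)
      = 2 * (β ^ 2 * J ^ 2 / Q) * (μ * q) / (π * ν / c) ^ 2 := by
    field_simp
  have e2 : J ^ 2 * β ^ 2 * s / (Q / 4 * π * ν)
      = 4 * (β ^ 2 * J ^ 2 / Q) / (π * ν / s) := by
    field_simp
  rw [e1, e2]
  generalize β ^ 2 * J ^ 2 / Q = A at *
  generalize π * ν / s = S at *
  generalize π * ν / c = C at *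
  have e3 : A ^ (μ / 2) = A ^ (μ / 2 - 1) * A := by
    rw [Real.rpow_sub hA, Real.rpow_one]; field_simp
  rw [e3] at hclosure
  rw [Real.div_rpow (by positivity) hS.le, Real.mul_rpow (by norm_num) hA.le]
  have hSa : 0 < S ^ (μ / 2 - 1) := by positivity
  rw [div_mul_div_comm, div_eq_iff (by positivity)]
  linear_combination 2 * 4 ^ (μ / 2 - 1) * hclosure
end

section
/- Let μ ∈ (0, 2] and s₂ ≥ 0, set s₁ = 2^{μ−1} and ε(x) = (1 − √(1 + 4x))²/4, and define E_min = −ε(s₁)(1 − s₂) if s₂ < 1/2 and E_min = −ε(s₁)/(4s₂) if s₂ ≥ 1/2. Then 0 ≤ −E_min ≤ 1, with −E_min = 1 if and only if μ = 2 and s₂ = 0. Consequently, for any β > 0 and ν ∈ (0, 1], the exponent λ_L = (2πν/β)√(−E_min) satisfies λ_L ≤ 2πν/β ≤ 2π/β, with λ_L = 2πν/β if and only if μ = 2 and s₂ = 0. -/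
open Real

/-- Non-maximal chaos in the Lévy SYK model: with `s₁ = 2^{μ−1}`,
`ε(x) = (1 − √(1+4x))²/4` and `E_min` the semi-analytic ground-state energy,
one has `0 ≤ −E_min ≤ 1` with equality `−E_min = 1` iff `μ = 2` and `s₂ = 0`;
consequently `λ_L = (2πν/β)√(−E_min) ≤ 2πν/β ≤ 2π/β`, with
`λ_L = 2πν/β` iff `μ = 2` and `s₂ = 0`. -/
theorem lyapunov_bound (μ s₂ s₁ Emin : ℝ) (hμ : μ ∈ Set.Ioc (0 : ℝ) 2)
    (hs₂ : 0 ≤ s₂) (hs₁ : s₁ = (2 : ℝ) ^ (μ - 1))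
    (hE : Emin = if s₂ < 1 / 2 then
        -((1 - Real.sqrt (1 + 4 * s₁)) ^ 2 / 4) * (1 - s₂)
      else -((1 - Real.sqrt (1 + 4 * s₁)) ^ 2 / 4) / (4 * s₂)) :
    (0 ≤ -Emin ∧ -Emin ≤ 1 ∧ (-Emin = 1 ↔ μ = 2 ∧ s₂ = 0)) ∧
    ∀ β > (0 : ℝ), ∀ ν ∈ Set.Ioc (0 : ℝ) 1,
      (2 * π * ν / β) * Real.sqrt (-Emin) ≤ 2 * π * ν / β ∧
      2 * π * ν / β ≤ 2 * π / β ∧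
      ((2 * π * ν / β) * Real.sqrt (-Emin) = 2 * π * ν / β ↔ μ = 2 ∧ s₂ = 0) := by
  obtain ⟨hμ0, hμ2⟩ := hμ
  have hs₁pos : 0 < s₁ := by rw [hs₁]; positivity
  have hs₁le : s₁ ≤ 2 := by
    rw [hs₁]
    calc (2 : ℝ) ^ (μ - 1) ≤ (2 : ℝ) ^ (1 : ℝ) :=
          Real.rpow_le_rpow_of_exponent_le (by norm_num) (by linarith)
      _ = 2 := Real.rpow_one 2
  have hs₁eq : s₁ = 2 ↔ μ = 2 := by
    constructor
    · intro h
      by_contra hne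
      have hlt : μ < 2 := lt_of_le_of_ne hμ2 hne
      have h2 : (2 : ℝ) ^ (μ - 1) < (2 : ℝ) ^ (1 : ℝ) :=
        Real.rpow_lt_rpow_of_exponent_lt (by norm_num) (by linarith)
      rw [Real.rpow_one, ← hs₁] at h2
      linarith
    · intro h
      rw [hs₁, h]
      norm_num
  have hr0 := Real.sqrt_nonneg (1 + 4 * s₁)
  have hrsq := Real.sq_sqrt (show (0 : ℝ) ≤ 1 + 4 * s₁ by linarith)
  generalize Real.sqrt (1 + 4 * s₁) = r at hE hr0 hrsq
  have hr1 : 1 < r := by nlinarith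
  have hr3 : r ≤ 3 := by nlinarith
  have he0 : 0 ≤ (1 - r) ^ 2 / 4 := by positivity
  have he1 : (1 - r) ^ 2 / 4 ≤ 1 := by nlinarith
  have heq : (1 - r) ^ 2 / 4 = 1 ↔ μ = 2 := by
    rw [← hs₁eq]
    constructor
    · intro h
      have h3 : r = 3 := by nlinarith
      rw [h3] at hrsq
      linarith
    · intro h
      have h3 : r = 3 := by nlinarith
      rw [h3]; norm_num
  generalize (1 - r) ^ 2 / 4 = e at hE he0 he1 heq
  have key : 0 ≤ -Emin ∧ -Emin ≤ 1 ∧ (-Emin = 1 ↔ μ = 2 ∧ s₂ = 0) := by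
    rw [← heq]
    by_cases hs : s₂ < 1 / 2
    · rw [if_pos hs] at hE
      refine ⟨by nlinarith, by nlinarith, ?_⟩
      constructor
      · intro h
        have h1 : e = 1 := by nlinarith
        subst h1
        exact ⟨rfl, by linarith⟩
      · rintro ⟨rfl, rfl⟩
        linarith
    · rw [if_neg hs] at hE
      push Not at hs
      have hE' : -Emin = e / (4 * s₂) := by rw [hE]; ring
      have hlt : e / (4 * s₂) < 1 := by
        rw [div_lt_one (by linarith)]; linarith
      refine ⟨by rw [hE']; positivity, by linarith, ?_⟩
      constructor
      · intro h; linarith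
      · rintro ⟨_, h⟩; linarith
  refine ⟨key, ?_⟩
  obtain ⟨k0, k1, k2⟩ := key
  intro β hβ ν hν
  obtain ⟨hν0, hν1⟩ := hν
  have hc : 0 < 2 * π * ν / β := by have := Real.pi_pos; positivity
  refine ⟨?_, ?_, ?_⟩
  · exact mul_le_of_le_one_right hc.le (Real.sqrt_le_one.mpr k1)
  · have := Real.pi_pos
    refine div_le_div_of_nonneg_right ?_ hβ.le
    exact mul_le_of_le_one_right (by positivity) hν1
  · rw [← k2, mul_eq_left₀ hc.ne', Real.sqrt_eq_one]
end
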